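/- Let n ≥ 1 and let M be the set of functions x : Y → Z_{2n+1} such that x((0,…,0)) = 0 and, for each e ∈ {f_0,…,f_n, g} and each 𝐮 ∈ Y all of whose coordinates lie in dom e, x(𝐮) ∈ dom e and x(e·𝐮) = e(x(𝐮)), where e·𝐮 denotes the coordinatewise action. Then: (a) every (a_1,…,a_{n+1}) ∈ B satisfies a_k ≠ 0 and |a_k| ≤ k for 1 ≤ k ≤ n, and B is closed under the coordinatewise operations ∧, ∨, ¬, →; (b) the map t given by t(x) = (x(𝐛_1), x(𝐛_2), …, x(𝐛_{n+1})) is a bijection from M onto B. -/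

import Mathlib

/-- Sugihara implication on the integers. -/
def SImp (a b : ℤ) : ℤ := if a ≤ b then max (-a) b else min (-a) b

/-- The universe of the Sugihara algebra `Z_{2n+1}`. -/
def Zodd (n : ℕ) : Set ℤ := {a : ℤ | -(n : ℤ) ≤ a ∧ a ≤ (n : ℤ)}

/-- The universe of the Sugihara algebra `Z_{2n}`. -/
def Zeven (n : ℕ) : Set ℤ := {a : ℤ | (-(n : ℤ) ≤ a ∧ a ≤ (n : ℤ)) ∧ a ≠ 0}

/-- The endomorphism `g` of `Z_{2n+1}`, as a total function on `ℤ`. -/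
def gOFun (a : ℤ) : ℤ := if 0 < a then a - 1 else if a < 0 then a + 1 else 0

/-- The underlying function of the partial endomorphism `f_i` of `Z_{2n+1}`. -/
def fOFun (i : ℕ) (a : ℤ) : ℤ :=
  if 2 ≤ i then
    (if a = (i : ℤ) - 1 then (i : ℤ) else if a = -((i : ℤ) - 1) then -(i : ℤ) else a)
  else a

/-- The domain of the partial endomorphism `f_i` of `Z_{2n+1}`. -/
def fODom (n i : ℕ) : Set ℤ := Zodd n \ {(i : ℤ), -(i : ℤ)}

/-- The maps `f_0, …, f_n, g` on `Z_{2n+1}`, as pairs (domain, function). -/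
def MapsOdd (n : ℕ) : Set (Set ℤ × (ℤ → ℤ)) :=
  {e | (∃ i : ℕ, i ≤ n ∧ e = (fODom n i, fOFun i)) ∨ e = (Zodd n, gOFun)}

/-- The test space `Y` for the odd case, as a set of `(n+1)`-tuples. -/
def YOdd (n : ℕ) : Set (Fin (n + 1) → ℤ) :=
  {u | (∀ i, u i ∈ Zodd n) ∧
    ∃ j : Fin (n + 1), 0 ≤ u j ∧ (∀ i, i ≤ j → u i = u j) ∧
      ∀ k l : Fin (n + 1), j ≤ k → k < l → u k < u l}

/-- The tuples `𝐛_1, …, 𝐛_{n+1}` in `Y` (odd case); here `1 ≤ k ≤ n+1`. -/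
def bOdd (n k : ℕ) : Fin (n + 1) → ℤ :=
  if k = n + 1 then fun p => ((p : ℕ) : ℤ)
  else fun p => max 1 (((p : ℕ) : ℤ) - ((n : ℤ) - (k : ℤ)))

/-- The admissibility algebra `B` for the odd case, as a set of `(n+1)`-tuples
(0-based index `k` corresponds to the 1-based coordinate `a_{k+1}`). -/
def BOdd (n : ℕ) : Set (Fin (n + 1) → ℤ) :=
  {a | ∃ j : ℕ, 1 ≤ j ∧ j ≤ n ∧ ∃ ε : ℤ, (ε = 1 ∨ ε = -1) ∧
    (∀ k : Fin (n + 1), (k : ℕ) < j → (a k = 1 ∨ a k = -1)) ∧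
    (∀ k : Fin (n + 1), j ≤ (k : ℕ) → (k : ℕ) < n →
      a k = ε * (((k : ℕ) : ℤ) - (j : ℤ) + 2)) ∧
    (if j < n then a (Fin.last n) = a ⟨n - 1, by omega⟩
      else (a (Fin.last n) = -1 ∨ a (Fin.last n) = 0 ∨ a (Fin.last n) = 1))}

/-- The set `M` of morphisms from `Y` to `Z_{2n+1}`: maps preserving the constant `0`-tuple
and the coordinatewise actions of `f_0, …, f_n, g`. -/
def MOdd (n : ℕ) : Set ({u : Fin (n + 1) → ℤ // u ∈ YOdd n} → ℤ) :=
  {x | (∀ u : {u : Fin (n + 1) → ℤ // u ∈ YOdd n}, x u ∈ Zodd n) ∧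
    (∀ u : {u : Fin (n + 1) → ℤ // u ∈ YOdd n}, u.1 = (fun _ => 0) → x u = 0) ∧
    ∀ e ∈ MapsOdd n, ∀ u v : {u : Fin (n + 1) → ℤ // u ∈ YOdd n},
      (∀ p, u.1 p ∈ e.1) → v.1 = (fun p => e.2 (u.1 p)) → x u ∈ e.1 ∧ x v = e.2 (x u)}

open Classical in
/-- The map `t`, sending `x ∈ M` to `(x(𝐛_1), …, x(𝐛_{n+1}))`. -/
noncomputable def tOdd (n : ℕ) (x : {u : Fin (n + 1) → ℤ // u ∈ YOdd n} → ℤ) :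
    Fin (n + 1) → ℤ :=
  fun k => if h : bOdd n ((k : ℕ) + 1) ∈ YOdd n then x ⟨bOdd n ((k : ℕ) + 1), h⟩ else 0

/-- Extension of a tuple to a function on `ℕ`. -/
def E {n : ℕ} (u : Fin (n + 1) → ℤ) (p : ℕ) : ℤ := if h : p < n + 1 then u ⟨p, h⟩ else 0

lemma E_coe {n : ℕ} (u : Fin (n + 1) → ℤ) (p : Fin (n + 1)) : E u (p : ℕ) = u p := by
  unfold E
  rw [dif_pos p.2]

lemma E_of {n : ℕ} (u : Fin (n + 1) → ℤ) (p : ℕ) (h : p ≤ n) :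
    E u p = u ⟨p, Nat.lt_succ_of_le h⟩ := by
  simp [E, Nat.lt_succ_of_le h]

/-- Membership in `Y` with witness `j`, for functions on `ℕ`. -/
def YP (n : ℕ) (u : ℕ → ℤ) (j : ℕ) : Prop :=
  j ≤ n ∧ (∀ i, i ≤ n → 0 ≤ u i ∧ u i ≤ n) ∧ (∀ i, i ≤ j → u i = u j) ∧
    ∀ p q, j ≤ p → p < q → q ≤ n → u p < u q

lemma mem_YOdd {n : ℕ} (u : Fin (n + 1) → ℤ) : u ∈ YOdd n ↔ ∃ j, YP n (E u) j := by
  constructor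
  · rintro ⟨h1, j, h2, h3, h4⟩
    refine ⟨j, by omega, ?_, ?_, ?_⟩
    · intro i hi
      rw [E_of u i hi]
      refine ⟨?_, (h1 _).2⟩
      rcases le_total (⟨i, Nat.lt_succ_of_le hi⟩ : Fin (n + 1)) j with h | h
      · rw [h3 _ h]; exact h2
      · rcases eq_or_lt_of_le h with h | h
        · rw [← h]; exact h2
        · exact h2.trans (h4 j _ le_rfl h).le
    · intro i hi
      rw [E_of u i (by omega), E_coe]
      exact h3 _ hi
    · intro p q hp hpq hq
      rw [E_of u p (by omega), E_of u q hq]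
      exact h4 _ _ hp hpq
  · rintro ⟨j, h0, h1, h2, h3⟩
    refine ⟨?_, ⟨j, by omega⟩, ?_, ?_, ?_⟩
    · intro i
      have := h1 i (by omega)
      rw [E_coe] at this
      constructor <;> omega
    · have := h1 j h0
      rw [E_of u j h0] at this
      exact this.1
    · intro i hi
      have := h2 i hi
      rwa [E_coe, E_of u j h0] at this
    · intro k l hk hl
      have := h3 k l hk hl (by omega)
      rwa [E_coe, E_coe] at this

/-- Recursive description of `B`. -/
def BP (n : ℕ) (a : ℕ → ℤ) : Prop :=
  (∀ k, k < n → a k ≠ 0 ∧ |a k| ≤ (k : ℤ) + 1) ∧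
  (∀ k, k + 1 < n → gOFun (gOFun (a (k + 1))) = gOFun (a k)) ∧
  gOFun (a n) = gOFun (a (n - 1))

lemma BP_of_mem {n : ℕ} (hn : 1 ≤ n) (a : Fin (n + 1) → ℤ) (h : a ∈ BOdd n) : BP n (E a) := by
  obtain ⟨j, hj1, hjn, ε, hε, h1, h2, h3⟩ := h
  have H1 : ∀ k, k < j → E a k = 1 ∨ E a k = -1 := by
    intro k hk
    rw [E_of a k (by omega)]
    exact h1 _ hk
  have H2 : ∀ k, j ≤ k → k < n → E a k = ε * ((k : ℤ) - j + 2) := by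
    intro k hk hk'
    rw [E_of a k (by omega)]
    exact h2 _ hk hk'
  refine ⟨?_, ?_, ?_⟩
  · intro k hk
    rcases lt_or_ge k j with h | h
    · rcases H1 k h with h | h <;> rw [h] <;> simp
    · have := H2 k h hk
      rw [this]
      rcases hε with rfl | rfl
      · rw [one_mul, abs_of_nonneg] <;> omega
      · rw [abs_of_nonpos] <;> omega
  · intro k hk
    rcases lt_trichotomy (k + 1) j with h | h | h
    · rcases H1 k (by omega) with h | h <;> rcases H1 (k+1) (by omega) with h' | h' <;>
        rw [h, h'] <;> simp [gOFun]
    · rw [H2 (k+1) (by omega) hk]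
      have e : ((k + 1 : ℕ) : ℤ) - j + 2 = 2 := by omega
      rw [e]
      rcases H1 k (by omega) with h | h <;> rcases hε with rfl | rfl <;>
        rw [h] <;> simp [gOFun]
    · rw [H2 (k+1) (by omega) hk, H2 k (by omega) (by omega)]
      rcases hε with rfl | rfl <;> unfold gOFun <;> split_ifs <;> omega
  · split_ifs at h3 with hjn'
    · rw [E_of a n le_rfl, E_of a (n-1) (by omega)]
      exact congrArg gOFun h3
    · have : E a n = a (Fin.last n) := E_of a n le_rfl
      rw [this]
      rcases H1 (n-1) (by omega) with h | h <;> rcases h3 with h3 | h3 | h3 <;>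
        rw [h, h3] <;> simp [gOFun]

lemma mem_of_BP {n : ℕ} (hn : 1 ≤ n) (a : Fin (n + 1) → ℤ) (h : BP n (E a)) : a ∈ BOdd n := by
  obtain ⟨h1, h2, h3⟩ := h
  have one : ∀ k, k < n → |E a k| < 2 → E a k = 1 ∨ E a k = -1 := by
    intro k hk h
    have := (h1 k hk).1
    rw [abs_lt] at h
    omega
  have hlast : a (Fin.last n) = E a n := (E_of a n le_rfl).symm
  have hpen : a ⟨n - 1, by omega⟩ = E a (n - 1) := (E_of a (n-1) (by omega)).symm
  by_cases hex : ∃ k, k < n ∧ 2 ≤ |E a k|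
  · classical
    let j := Nat.find hex
    obtain ⟨hj, hj2⟩ : j < n ∧ 2 ≤ |E a j| := Nat.find_spec hex
    have hmin : ∀ k, k < j → |E a k| < 2 := by
      intro k hk
      have := Nat.find_min hex hk
      by_contra hc
      exact this ⟨by omega, by omega⟩
    have hj1 : 1 ≤ j := by
      by_contra hc
      have : j = 0 := by omega
      rw [this] at hj2
      have := (h1 0 (by omega)).2
      simp only [Nat.cast_zero] at this
      omega
    have hbase : E a j = 2 ∨ E a j = -2 := by
      have e := h2 (j - 1) (by omega)
      rw [show j - 1 + 1 = j by omega] at e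
      have := one (j-1) (by omega) (hmin _ (by omega))
      rw [le_abs] at hj2
      rcases this with h | h <;> rw [h] at e <;> unfold gOFun at e <;> split_ifs at e <;> omega
    obtain ⟨ε, hε, hb⟩ : ∃ ε : ℤ, (ε = 1 ∨ ε = -1) ∧ E a j = ε * 2 := by
      rcases hbase with h | h
      · exact ⟨1, Or.inl rfl, by omega⟩
      · exact ⟨-1, Or.inr rfl, by omega⟩
    have hrec : ∀ k, j ≤ k → k < n → E a k = ε * ((k : ℤ) - j + 2) := by
      intro k hk
      induction k, hk using Nat.le_induction with
      | base => intro _; rw [hb]; ring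
      | succ k hk ih =>
        intro hk'
        have e1 := ih (by omega)
        have e2 := h2 k hk'
        rw [e1] at e2
        have := h1 (k+1) hk'
        rcases hε with rfl | rfl <;> unfold gOFun at e2 <;> split_ifs at e2 <;> omega
    refine ⟨j, hj1, hj.le, ε, hε, ?_, ?_, ?_⟩
    · intro k hk
      rw [← E_coe a k]
      exact one _ (by omega) (hmin _ hk)
    · intro k hk hk'
      rw [← E_coe a k]
      exact hrec _ hk hk'
    · rw [if_pos hj, hlast, hpen]
      have e := hrec (n-1) (by omega) (by omega)
      rw [e] at h3 ⊢
      rcases hε with rfl | rfl <;> unfold gOFun at h3 <;> split_ifs at h3 <;> omega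
  · push Not at hex
    refine ⟨n, hn, le_rfl, 1, Or.inl rfl, ?_, ?_, ?_⟩
    · intro k hk
      rw [← E_coe a k]
      exact one _ hk (hex _ hk)
    · intro k hk hk'
      omega
    · rw [if_neg (lt_irrefl n), hlast]
      rcases one (n-1) (by omega) (hex _ (by omega)) with h | h <;> rw [h] at h3 <;>
        unfold gOFun at h3 <;> split_ifs at h3 <;> omega

lemma g_min (a b : ℤ) : gOFun (min a b) = min (gOFun a) (gOFun b) := by
  unfold gOFun; split_ifs <;> omega

lemma g_max (a b : ℤ) : gOFun (max a b) = max (gOFun a) (gOFun b) := by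
  unfold gOFun; split_ifs <;> omega

lemma g_neg (a : ℤ) : gOFun (-a) = -gOFun a := by
  unfold gOFun; split_ifs <;> omega

lemma g_imp (a b : ℤ) : gOFun (SImp a b) = SImp (gOFun a) (gOFun b) := by
  unfold SImp gOFun; split_ifs <;> omega

lemma BP_op {n : ℕ} (a b c : ℕ → ℤ) (op : ℤ → ℤ → ℤ) (ha : BP n a) (hb : BP n b)
    (hop : ∀ s t, gOFun (op s t) = op (gOFun s) (gOFun t))
    (hv : ∀ s t, op s t = s ∨ op s t = t ∨ op s t = -s ∨ op s t = -t)
    (hc : ∀ k, k ≤ n → c k = op (a k) (b k)) : BP n c := by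
  refine ⟨?_, ?_, ?_⟩
  · intro k hk
    rw [hc k hk.le]
    have h1 := ha.1 k hk
    have h2 := hb.1 k hk
    rcases hv (a k) (b k) with h | h | h | h <;> rw [h]
    · exact h1
    · exact h2
    · rw [abs_neg]; exact ⟨neg_ne_zero.2 h1.1, h1.2⟩
    · rw [abs_neg]; exact ⟨neg_ne_zero.2 h2.1, h2.2⟩
  · intro k hk
    rw [hc k (by omega), hc (k+1) (by omega), hop, hop, hop, ha.2.1 k hk, hb.2.1 k hk]
  · rw [hc n le_rfl, hc (n-1) (by omega), hop, hop, ha.2.2, hb.2.2]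

lemma mem_op {n : ℕ} (hn : 1 ≤ n) (a b : Fin (n + 1) → ℤ) (op : ℤ → ℤ → ℤ)
    (ha : a ∈ BOdd n) (hb : b ∈ BOdd n)
    (hop : ∀ s t, gOFun (op s t) = op (gOFun s) (gOFun t))
    (hv : ∀ s t, op s t = s ∨ op s t = t ∨ op s t = -s ∨ op s t = -t) :
    (fun k => op (a k) (b k)) ∈ BOdd n := by
  refine mem_of_BP hn _ (BP_op (E a) (E b) _ op (BP_of_mem hn a ha) (BP_of_mem hn b hb) hop hv ?_)
  intro k hk
  rw [E_of _ k hk, E_of _ k hk, E_of _ k hk]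

/-! Actions on `Y`. -/

lemma YP_unique {n : ℕ} {u : ℕ → ℤ} {j j' : ℕ} (h : YP n u j) (h' : YP n u j') : j = j' := by
  obtain ⟨h0, h1, h2, h3⟩ := h
  obtain ⟨h0', h1', h2', h3'⟩ := h'
  rcases lt_trichotomy j j' with hl | hl | hl
  · have := h3 j j' le_rfl hl h0'
    have := h2' j hl.le
    omega
  · exact hl
  · have := h3' j' j le_rfl hl h0
    have := h2 j' hl.le
    omega

lemma YP_f {n : ℕ} {u v : ℕ → ℤ} {j i : ℕ} (h : YP n u j) (hi : i ≤ n)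
    (hu : ∀ p, p ≤ n → u p ≠ i) (hv : ∀ p, p ≤ n → v p = fOFun i (u p)) : YP n v j := by
  obtain ⟨h0, h1, h2, h3⟩ := h
  refine ⟨h0, ?_, ?_, ?_⟩
  · intro p hp
    rw [hv p hp]
    have := h1 p hp
    unfold fOFun; split_ifs <;> omega
  · intro p hp
    rw [hv p (by omega), hv j h0, h2 p hp]
  · intro p q hp hpq hq
    rw [hv p (by omega), hv q hq]
    have a1 := h1 p (by omega)
    have a2 := h1 q (by omega)
    have a3 := hu p (by omega)
    have a4 := hu q (by omega)
    have a5 := h3 p q hp hpq hq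
    unfold fOFun; split_ifs <;> omega

lemma YP_g {n : ℕ} {u v : ℕ → ℤ} {j : ℕ} (h : YP n u j)
    (hc : ¬ (u j = 0 ∧ j < n ∧ u (j + 1) = 1))
    (hv : ∀ p, p ≤ n → v p = gOFun (u p)) : YP n v j := by
  obtain ⟨h0, h1, h2, h3⟩ := h
  refine ⟨h0, ?_, ?_, ?_⟩
  · intro p hp
    rw [hv p hp]
    have := h1 p hp
    unfold gOFun; split_ifs <;> omega
  · intro p hp
    rw [hv p (by omega), hv j h0, h2 p hp]
  · intro p q hp hpq hq
    rw [hv p (by omega), hv q hq]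
    have a1 := h1 p (by omega)
    have a2 := h1 q (by omega)
    have a5 := h3 p q hp hpq hq
    have key : ¬ (u p = 0 ∧ u q = 1) := by
      rintro ⟨e1, e2⟩
      have hjp : p = j := by
        by_contra hne
        have := h3 j p le_rfl (by omega) (by omega)
        have := h1 j h0
        omega
      subst hjp
      apply hc
      have : q = p + 1 := by
        by_contra hne
        have := h3 p (p+1) le_rfl (by omega) (by omega)
        have := h3 (p+1) q (by omega) (by omega) (by omega)
        omega
      subst this
      exact ⟨e1, by omega, e2⟩
    unfold gOFun; split_ifs <;> omega

lemma YP_g' {n : ℕ} {u v : ℕ → ℤ} {j : ℕ} (h : YP n u j)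
    (hc : u j = 0 ∧ j < n ∧ u (j + 1) = 1)
    (hv : ∀ p, p ≤ n → v p = gOFun (u p)) : YP n v (j + 1) := by
  obtain ⟨h0, h1, h2, h3⟩ := h
  obtain ⟨c1, c2, c3⟩ := hc
  refine ⟨c2, ?_, ?_, ?_⟩
  · intro p hp
    rw [hv p hp]
    have := h1 p hp
    unfold gOFun; split_ifs <;> omega
  · intro p hp
    rw [hv p (by omega), hv (j+1) c2, c3]
    rcases Nat.lt_or_ge p (j+1) with h | h
    · rw [h2 p (by omega), c1]; simp [gOFun]
    · rw [show p = j + 1 by omega, c3]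
  · intro p q hp hpq hq
    rw [hv p (by omega), hv q hq]
    have a1 := h3 j p le_rfl (by omega) (by omega)
    have a5 := h3 p q (by omega) hpq hq
    unfold gOFun; split_ifs <;> omega

lemma YP_zero {n : ℕ} {u : ℕ → ℤ} (h : YP n u 0) : ∀ p, p ≤ n → u p = p := by
  obtain ⟨h0, h1, h2, h3⟩ := h
  have lo : ∀ p, p ≤ n → (p : ℤ) ≤ u p := by
    intro p
    induction p with
    | zero => intro _; simpa using (h1 0 (by omega)).1
    | succ p ih =>
      intro hp
      have := ih (by omega)
      have := h3 p (p+1) (by omega) (by omega) hp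
      push_cast; omega
  have hi : ∀ d, d ≤ n → u (n - d) ≤ (n : ℤ) - d := by
    intro d
    induction d with
    | zero => intro _; simpa using (h1 n le_rfl).2
    | succ d ih =>
      intro hp
      have := ih (by omega)
      have := h3 (n - (d+1)) (n-d) (by omega) (by omega) (by omega)
      push_cast; omega
  intro p hp
  have := lo p hp
  have := hi (n - p) (by omega)
  rw [show n - (n - p) = p by omega] at this
  omega

/-- The value at `u` (with witness `j`) of the morphism with parameters `a`. -/
def val (n : ℕ) (a u : ℕ → ℤ) (j : ℕ) : ℤ :=
  if j = 0 then a n else Int.sign (a (n - j)) * u (j - 1 + (a (n - j)).natAbs)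

lemma sign_cases {n : ℕ} {a : ℕ → ℤ} (ha : BP n a) {j : ℕ} (hj : 1 ≤ j) (hjn : j ≤ n) :
    ∃ r : ℕ, 1 ≤ r ∧ j - 1 + r ≤ n ∧ (a (n - j)).natAbs = r ∧
      ((a (n - j) = r ∧ Int.sign (a (n - j)) = 1) ∨
        (a (n - j) = -(r : ℤ) ∧ Int.sign (a (n - j)) = -1)) := by
  have h := ha.1 (n - j) (by omega)
  rw [abs_le] at h
  refine ⟨(a (n - j)).natAbs, by omega, by omega, rfl, ?_⟩
  rcases lt_or_gt_of_ne h.1 with h' | h'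
  · exact Or.inr ⟨by omega, Int.sign_eq_neg_one_of_neg h'⟩
  · exact Or.inl ⟨by omega, Int.sign_eq_one_of_pos h'⟩

lemma an_bound {n : ℕ} (hn : 1 ≤ n) {a : ℕ → ℤ} (ha : BP n a) : -(n : ℤ) ≤ a n ∧ a n ≤ n := by
  have h1 := ha.1 (n-1) (by omega)
  rw [abs_le] at h1
  have h2 := ha.2.2
  unfold gOFun at h2
  split_ifs at h2 <;> omega

lemma val_bound {n : ℕ} (hn : 1 ≤ n) {a u : ℕ → ℤ} (ha : BP n a) {j : ℕ} (h : YP n u j) :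
    val n a u j ∈ Zodd n := by
  unfold val
  split_ifs with hj
  · exact an_bound hn ha
  · obtain ⟨r, hr1, hr2, hr3, hr⟩ := sign_cases ha (by omega : 1 ≤ j) h.1
    rw [hr3]
    have := h.2.1 (j - 1 + r) hr2
    rcases hr with ⟨-, hr⟩ | ⟨-, hr⟩ <;> rw [hr] <;> constructor <;> omega

lemma val_f {n : ℕ} {a u v : ℕ → ℤ} (ha : BP n a) {j i : ℕ} (h : YP n u j)
    (hi : i ≤ n) (hu : ∀ p, p ≤ n → u p ≠ i) (hv : ∀ p, p ≤ n → v p = fOFun i (u p)) :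
    (val n a u j ≠ i ∧ val n a u j ≠ -(i : ℤ)) ∧ val n a v j = fOFun i (val n a u j) := by
  have hj : j ≠ 0 := by
    rintro rfl
    exact hu i hi (YP_zero h i hi)
  unfold val
  rw [if_neg hj, if_neg hj]
  obtain ⟨r, hr1, hr2, hr3, hr⟩ := sign_cases ha (by omega : 1 ≤ j) h.1
  rw [hr3, hv _ hr2]
  have b1 := h.2.1 (j - 1 + r) hr2
  have b2 := hu (j - 1 + r) hr2
  rcases hr with ⟨-, hr⟩ | ⟨-, hr⟩ <;> rw [hr]
  · refine ⟨⟨by omega, by omega⟩, by rw [one_mul, one_mul]⟩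
  · refine ⟨⟨by omega, by omega⟩, ?_⟩
    unfold fOFun; split_ifs <;> omega

lemma val_g {n : ℕ} {a u v : ℕ → ℤ} (ha : BP n a) {j j' : ℕ} (h : YP n u j)
    (h' : YP n v j') (hv : ∀ p, p ≤ n → v p = gOFun (u p)) (hn : 1 ≤ n) :
    val n a v j' = gOFun (val n a u j) := by
  by_cases hc : u j = 0 ∧ j < n ∧ u (j + 1) = 1
  · obtain rfl := YP_unique h' (YP_g' h hc hv)
    obtain ⟨c1, c2, c3⟩ := hc
    obtain ⟨r, hr1, hr2, hr3, hr⟩ := sign_cases ha (by omega : 1 ≤ j + 1) c2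
    unfold val
    rw [if_neg (by omega), hr3, hv _ hr2]
    by_cases hj : j = 0
    · subst hj
      rw [if_pos rfl, ha.2.2]
      have e := YP_zero h _ hr2
      rw [e]
      simp only [zero_add] at *
      rcases hr with ⟨hr, hr'⟩ | ⟨hr, hr'⟩ <;> rw [hr', hr] <;> unfold gOFun <;> split_ifs <;> omega
    · rw [if_neg hj]
      obtain ⟨s, hs1, hs2, hs3, hs⟩ := sign_cases ha (by omega : 1 ≤ j) h.1
      have e := ha.2.1 (n - (j + 1)) (by omega)
      rw [show n - (j + 1) + 1 = n - j by omega] at e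
      rw [hs3]
      have key : (r = 1 ∧ (s = 1 ∨ s = 2)) ∨ (s = r + 1 ∧ 2 ≤ r ∧
          Int.sign (a (n - j)) = Int.sign (a (n - (j + 1)))) := by
        rcases hr with ⟨hr, hr'⟩ | ⟨hr, hr'⟩ <;> rcases hs with ⟨hs, hs'⟩ | ⟨hs, hs'⟩ <;>
          rw [hr', hs'] <;> rw [hr, hs] at e <;> unfold gOFun at e <;> split_ifs at e <;> omega
      rcases key with ⟨rfl, hs⟩ | ⟨rfl, hr2, hsg⟩
      · have e1 : u (j + 1 - 1 + 1) = 1 := by simpa using c3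
        have e2 : u (j - 1 + s) = 0 ∨ u (j - 1 + s) = 1 := by
          rcases hs with rfl | rfl
          · left; rw [show j - 1 + 1 = j by omega]; exact c1
          · right; rw [show j - 1 + 2 = j + 1 by omega]; exact c3
        rw [e1]
        have e3 : Int.sign (a (n - j)) = 1 ∨ Int.sign (a (n - j)) = -1 := by
          have := Int.sign_trichotomy (a (n - j))
          have := (ha.1 (n - j) (by omega)).1
          rw [Ne, ← Int.sign_eq_zero_iff_zero] at this
          omega
        rcases e2 with e2 | e2 <;> rcases e3 with e3 | e3 <;> rw [e2, e3] <;> simp [gOFun]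
      · rw [hsg, show j + 1 - 1 + r = j - 1 + (r + 1) by omega]
        rcases hr with ⟨-, hr⟩ | ⟨-, hr⟩ <;> rw [hr] <;> unfold gOFun <;> split_ifs <;> omega
  · obtain rfl := YP_unique h' (YP_g h hc hv)
    have hj : j' ≠ 0 := by
      rintro rfl
      apply hc
      refine ⟨?_, by omega, ?_⟩
      · simpa using YP_zero h 0 (by omega)
      · simpa using YP_zero h 1 hn
    unfold val
    rw [if_neg hj, if_neg hj]
    obtain ⟨r, hr1, hr2, hr3, hr⟩ := sign_cases ha (by omega : 1 ≤ j') h.1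
    rw [hr3, hv _ hr2]
    rcases hr with ⟨-, hr⟩ | ⟨-, hr⟩ <;> rw [hr] <;> unfold gOFun <;> split_ifs <;> omega

/-- The points of `Y`. -/
abbrev YT (n : ℕ) := {u : Fin (n + 1) → ℤ // u ∈ YOdd n}

lemma E_comp {n : ℕ} (u v : Fin (n + 1) → ℤ) (f : ℤ → ℤ) (h : v = fun p => f (u p)) :
    ∀ p, p ≤ n → E v p = f (E u p) := by
  intro p hp
  rw [E_of v p hp, E_of u p hp, h]

lemma E_ext {n : ℕ} (u v : Fin (n + 1) → ℤ) (h : ∀ p, p ≤ n → E u p = E v p) : u = v := by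
  funext p
  have := h p (by omega)
  rwa [E_coe, E_coe] at this

lemma mor_f {n : ℕ} {x : YT n → ℤ} (hx : x ∈ MOdd n) (u v : YT n) (i : ℕ) (hi : i ≤ n)
    (hu : ∀ p, p ≤ n → E u.1 p ≠ i) (hv : ∀ p, p ≤ n → E v.1 p = fOFun i (E u.1 p)) :
    (x u ≠ i ∧ x u ≠ -(i : ℤ)) ∧ x v = fOFun i (x u) := by
  obtain ⟨j, hj⟩ := (mem_YOdd u.1).1 u.2
  have := hx.2.2 (fODom n i, fOFun i) (Or.inl ⟨i, hi, rfl⟩) u v ?_ ?_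
  · refine ⟨?_, this.2⟩
    have h := this.1.2
    simpa using h
  · intro p
    have h1 := hj.2.1 p (by omega)
    have h2 := hu p (by omega)
    rw [E_coe] at h1 h2
    refine ⟨⟨by omega, by omega⟩, ?_⟩
    simp only [Set.mem_insert_iff, Set.mem_singleton_iff]
    omega
  · funext p
    have := hv p (by omega)
    rwa [E_coe, E_coe] at this

lemma mor_g {n : ℕ} {x : YT n → ℤ} (hx : x ∈ MOdd n) (u v : YT n)
    (hv : ∀ p, p ≤ n → E v.1 p = gOFun (E u.1 p)) : x v = gOFun (x u) := by
  refine (hx.2.2 (Zodd n, gOFun) (Or.inr rfl) u v (fun p => u.2.1 p) ?_).2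
  funext p
  have := hv p (by omega)
  rwa [E_coe, E_coe] at this

lemma mor_range {n : ℕ} {x : YT n → ℤ} (hx : x ∈ MOdd n) (u : YT n) :
    ∃ p, p ≤ n ∧ E u.1 p = |x u| := by
  by_contra hc
  push Not at hc
  have hb := hx.1 u
  have hi : (x u).natAbs ≤ n := by
    have h1 := hb.1
    have h2 := hb.2
    omega
  obtain ⟨j, hj⟩ := (mem_YOdd u.1).1 u.2
  have hne : ∀ p, p ≤ n → E u.1 p ≠ ((x u).natAbs : ℕ) := by
    intro p hp
    rw [Int.natCast_natAbs]
    exact hc p hp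
  let w : Fin (n + 1) → ℤ := fun p => fOFun (x u).natAbs (u.1 p)
  have hw := E_comp u.1 w (fOFun (x u).natAbs) rfl
  have hwY : w ∈ YOdd n := (mem_YOdd w).2 ⟨j, YP_f hj hi hne hw⟩
  have := (mor_f hx u ⟨w, hwY⟩ _ hi hne hw).1
  omega

lemma E_b {n k : ℕ} (hk : k < n) (p : ℕ) (hp : p ≤ n) :
    E (bOdd n (k + 1)) p = max 1 ((p : ℤ) - ((n : ℤ) - ((k : ℤ) + 1))) := by
  rw [E_of _ p hp]
  unfold bOdd
  rw [if_neg (by omega)]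
  push_cast
  rfl

lemma E_b' {n : ℕ} (p : ℕ) (hp : p ≤ n) : E (bOdd n (n + 1)) p = (p : ℤ) := by
  rw [E_of _ p hp]
  unfold bOdd
  rw [if_pos rfl]

lemma b_YP {n k : ℕ} (hk : k < n) : YP n (E (bOdd n (k + 1))) (n - k) := by
  refine ⟨by omega, ?_, ?_, ?_⟩
  · intro i hi
    rw [E_b hk i hi]; omega
  · intro i hi
    rw [E_b hk i (by omega), E_b hk _ (by omega)]; omega
  · intro p q hp hpq hq
    rw [E_b hk p (by omega), E_b hk _ (by omega)]; omega

lemma b_YP' {n : ℕ} : YP n (E (bOdd n (n + 1))) 0 := by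
  refine ⟨by omega, ?_, ?_, ?_⟩
  · intro i hi
    rw [E_b' i hi]; omega
  · intro i hi
    rw [E_b' i (by omega), E_b' _ (by omega)]; omega
  · intro p q hp hpq hq
    rw [E_b' p (by omega), E_b' _ (by omega)]; omega

lemma b_mem {n k : ℕ} (hk : k ≤ n) : bOdd n (k + 1) ∈ YOdd n := by
  rw [mem_YOdd]
  rcases Nat.lt_or_ge k n with h | h
  · exact ⟨_, b_YP h⟩
  · obtain rfl : k = n := by omega
    exact ⟨_, b_YP'⟩

lemma E_t {n k : ℕ} (hk : k ≤ n) (x : YT n → ℤ) :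
    E (tOdd n x) k = x ⟨bOdd n (k + 1), b_mem hk⟩ := by
  rw [E_of _ k hk]
  unfold tOdd
  exact dif_pos (b_mem hk)

lemma t_mem {n : ℕ} (hn : 1 ≤ n) {x : YT n → ℤ} (hx : x ∈ MOdd n) : tOdd n x ∈ BOdd n := by
  have gY : ∀ u : YT n, (fun p => gOFun (u.1 p)) ∈ YOdd n := by
    intro u
    obtain ⟨j, hj⟩ := (mem_YOdd u.1).1 u.2
    rw [mem_YOdd]
    by_cases hc : E u.1 j = 0 ∧ j < n ∧ E u.1 (j + 1) = 1
    · exact ⟨_, YP_g' hj hc (E_comp u.1 _ gOFun rfl)⟩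
    · exact ⟨_, YP_g hj hc (E_comp u.1 _ gOFun rfl)⟩
  let G : YT n → YT n := fun u => ⟨_, gY u⟩
  have EG : ∀ u p, p ≤ n → E (G u).1 p = gOFun (E u.1 p) := fun u => E_comp u.1 _ gOFun rfl
  have xG : ∀ u, x (G u) = gOFun (x u) := fun u => mor_g hx u (G u) (EG u)
  refine mem_of_BP hn _ ⟨?_, ?_, ?_⟩
  · intro k hk
    rw [E_t hk.le]
    obtain ⟨p, hp, h⟩ := mor_range hx ⟨bOdd n (k + 1), b_mem hk.le⟩
    rw [← h]
    simp only [E_b hk p hp] at h ⊢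
    refine ⟨?_, by omega⟩
    intro h0
    rw [h0, abs_zero] at h
    omega
  · intro k hk
    rw [E_t (by omega : k + 1 ≤ n), E_t (by omega : k ≤ n), ← xG, ← xG, ← xG]
    congr 1
    apply Subtype.ext
    apply E_ext
    intro p hp
    rw [EG _ _ hp, EG _ _ hp, EG _ _ hp, E_b hk p hp, E_b (by omega : k < n) p hp]
    unfold gOFun; split_ifs <;> omega
  · rw [E_t (by omega : n ≤ n), E_t (by omega : n - 1 ≤ n), ← xG, ← xG]
    congr 1
    apply Subtype.ext
    apply E_ext
    intro p hp
    rw [EG _ _ hp, EG _ _ hp, E_b' p hp, E_b (by omega : n - 1 < n) p hp]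
    unfold gOFun; split_ifs <;> omega

lemma t_inj {n : ℕ} (hn : 1 ≤ n) {x y : YT n → ℤ} (hx : x ∈ MOdd n) (hy : y ∈ MOdd n)
    (hxy : tOdd n x = tOdd n y) : x = y := by
  have hb : ∀ k (hk : k ≤ n), x ⟨bOdd n (k + 1), b_mem hk⟩ = y ⟨bOdd n (k + 1), b_mem hk⟩ := by
    intro k hk
    rw [← E_t hk x, ← E_t hk y, hxy]
  suffices H : ∀ (N : ℕ) (u : YT n), (∑ p, u.1 p).toNat ≤ N → x u = y u from
    funext fun u => H _ u le_rfl
  intro N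
  induction N using Nat.strong_induction_on with
  | _ N ih =>
  intro u hN
  obtain ⟨j, hj⟩ := (mem_YOdd u.1).1 u.2
  have hnn : ∀ p, 0 ≤ u.1 p := by
    intro p
    have := (hj.2.1 p (by omega)).1
    rwa [E_coe] at this
  by_cases hex : ∃ p, p ≤ n ∧ 2 ≤ E u.1 p ∧ ∀ q, q ≤ n → E u.1 q ≠ E u.1 p - 1
  · obtain ⟨p, hp, hp2, hq⟩ := hex
    obtain ⟨m, hm⟩ : ∃ m : ℕ, E u.1 p = m := ⟨(E u.1 p).toNat, by omega⟩
    rw [hm] at hp2 hq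
    have hmn := (hj.2.1 p hp).2
    rw [hm] at hmn
    let d : ℤ → ℤ := fun z => if z = m then m - 1 else z
    let w : Fin (n + 1) → ℤ := fun p => d (u.1 p)
    have hw := E_comp u.1 w d rfl
    have hwY : YP n (E w) j := by
      obtain ⟨h0, h1, h2, h3⟩ := hj
      refine ⟨h0, ?_, ?_, ?_⟩
      · intro i hi
        rw [hw i hi]
        have := h1 i hi
        simp only [d]; split_ifs <;> omega
      · intro i hi
        rw [hw i (by omega), hw j h0, h2 i hi]
      · intro k l hk hkl hl
        rw [hw k (by omega), hw l hl]
        have a1 := h3 k l hk hkl hl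
        have a2 := hq k (by omega)
        simp only [d]; split_ifs <;> omega
    let W : YT n := ⟨w, (mem_YOdd w).2 ⟨j, hwY⟩⟩
    have hne : ∀ p, p ≤ n → E W.1 p ≠ m := by
      intro i hi
      change E w i ≠ m
      rw [hw i hi]
      simp only [d]; split_ifs <;> omega
    have hf : ∀ p, p ≤ n → E u.1 p = fOFun m (E W.1 p) := by
      intro i hi
      change _ = fOFun m (E w i)
      rw [hw i hi]
      have := hq i hi
      have := (hj.2.1 i hi).1
      simp only [d]; unfold fOFun; split_ifs <;> omega
    rw [(mor_f hx W u m (by omega) hne hf).2, (mor_f hy W u m (by omega) hne hf).2]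
    have hlt : ∑ p, w p < ∑ p, u.1 p := by
      apply Finset.sum_lt_sum
      · intro i _
        simp only [w, d]; split_ifs <;> omega
      · refine ⟨⟨p, by omega⟩, Finset.mem_univ _, ?_⟩
        rw [E_of _ p hp] at hm
        simp only [w, d, hm]; simp
    have hpos : 0 ≤ ∑ p, w p := by
      apply Finset.sum_nonneg
      intro i _
      have := hnn i
      simp only [w, d]; split_ifs <;> omega
    rw [ih (∑ p, w p).toNat (by omega) W le_rfl]
  · push Not at hex
    obtain ⟨h0, h1, h2, h3⟩ := hj
    have step : ∀ p, j ≤ p → p + 1 ≤ n → E u.1 (p + 1) = E u.1 p + 1 := by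
      intro p hp hpn
      have a1 := h3 p (p+1) hp (by omega) hpn
      have a2 := h1 p (by omega)
      by_cases h : 2 ≤ E u.1 (p + 1)
      · obtain ⟨q, hq, e⟩ := hex (p+1) hpn h
        rcases lt_trichotomy q p with hl | hl | hl
        · rcases le_or_gt j q with hjq | hjq
          · have := h3 q p hjq hl (by omega)
            omega
          · have e1 := h2 q hjq.le
            rcases eq_or_lt_of_le hp with rfl | hp'
            · omega
            · have := h3 j p le_rfl hp' (by omega)
              omega
        · subst hl; omega
        · rcases eq_or_lt_of_le (show p + 1 ≤ q by omega) with rfl | hl'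
          · omega
          · have := h3 (p+1) q (by omega) hl' hq
            omega
      · omega
    have hj01 : E u.1 j = 0 ∨ E u.1 j = 1 := by
      by_contra hc
      have := h1 j h0
      obtain ⟨q, hq, e⟩ := hex j h0 (by omega)
      rcases le_or_gt q j with hl | hl
      · have := h2 q hl
        omega
      · have := h3 j q le_rfl hl hq
        omega
    have form : ∀ p, j ≤ p → p ≤ n → E u.1 p = E u.1 j + ((p : ℤ) - j) := by
      intro p hp
      induction p, hp using Nat.le_induction with
      | base => intro _; ring
      | succ p hp ih' =>
        intro hpn
        rw [step p hp hpn, ih' (by omega)]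
        push_cast; ring
    have form' : ∀ p, p ≤ n → E u.1 p = E u.1 j + max 0 ((p : ℤ) - j) := by
      intro p hp
      rcases le_or_gt j p with h | h
      · rw [form p h hp]; omega
      · rw [h2 p h.le]; omega
    rcases hj01 with e | e
    · by_cases hj0 : j = 0
      · have : u = ⟨bOdd n (n + 1), b_mem le_rfl⟩ := by
          apply Subtype.ext
          apply E_ext
          intro p hp
          rw [form' p hp, E_b' p hp, e]; omega
        rw [this]; exact hb n le_rfl
      · have hg : ∀ p, p ≤ n → E u.1 p = gOFun (E (bOdd n (n - j + 1)) p) := by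
          intro p hp
          rw [form' p hp, E_b (by omega : n - j < n) p hp, e]
          unfold gOFun; split_ifs <;> omega
        rw [mor_g hx ⟨_, b_mem (by omega)⟩ u hg, mor_g hy ⟨_, b_mem (by omega)⟩ u hg,
          hb (n - j) (by omega)]
    · have hj0 : j ≠ 0 := by
        rintro rfl
        have := form' n le_rfl
        have := h1 n le_rfl
        omega
      have : u = ⟨bOdd n (n - j + 1), b_mem (by omega)⟩ := by
        apply Subtype.ext
        apply E_ext
        intro p hp
        rw [form' p hp, E_b (by omega : n - j < n) p hp, e]; omega
      rw [this]; exact hb (n - j) (by omega)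

lemma t_surj {n : ℕ} (hn : 1 ≤ n) (a : Fin (n + 1) → ℤ) (ha : a ∈ BOdd n) :
    ∃ x ∈ MOdd n, tOdd n x = a := by
  have hB := BP_of_mem hn a ha
  choose J hJ using fun u : YT n => (mem_YOdd u.1).1 u.2
  refine ⟨fun u => val n (E a) (E u.1) (J u), ⟨?_, ?_, ?_⟩, ?_⟩
  · intro u
    exact val_bound hn hB (hJ u)
  · intro u hu
    have hu0 : ∀ p, p ≤ n → E u.1 p = 0 := by
      intro p hp
      rw [E_of _ p hp, hu]
    have hj : J u ≠ 0 := by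
      intro h
      have h' := hJ u
      rw [h] at h'
      have := YP_zero h' n le_rfl
      have := hu0 n le_rfl
      omega
    obtain ⟨r, hr1, hr2, hr3, hr⟩ := sign_cases hB (by omega : 1 ≤ J u) (hJ u).1
    change val n (E a) (E u.1) (J u) = 0
    unfold val
    rw [if_neg hj, hr3, hu0 _ hr2, mul_zero]
  · rintro e (⟨i, hi, rfl⟩ | rfl) u v hu hv
    · have hv' := E_comp u.1 v.1 _ hv
      have hu' : ∀ p, p ≤ n → E u.1 p ≠ i := by
        intro p hp h
        rw [E_of _ p hp] at h
        exact (hu ⟨p, by omega⟩).2 (Or.inl h)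
      have hvv := YP_f (hJ u) hi hu' hv'
      have key := val_f hB (hJ u) hi hu' hv'
      rw [← YP_unique (hJ v) hvv] at hvv
      refine ⟨⟨val_bound hn hB (hJ u), ?_⟩, ?_⟩
      · rintro (h | h)
        · exact key.1.1 h
        · exact key.1.2 h
      · change val n (E a) (E v.1) (J v) = _
        rw [YP_unique (hJ v) (YP_f (hJ u) hi hu' hv')]
        exact key.2
    · exact ⟨val_bound hn hB (hJ u), val_g hB (hJ u) (hJ v) (E_comp u.1 v.1 _ hv) hn⟩
  · apply E_ext
    intro k hk
    rw [E_t hk]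
    rcases Nat.lt_or_ge k n with h | h
    · have e := YP_unique (hJ ⟨bOdd n (k + 1), b_mem hk⟩) (b_YP h)
      simp only [e]
      obtain ⟨r, hr1, hr2, hr3, hr⟩ := sign_cases hB (by omega : 1 ≤ n - k) (by omega)
      unfold val
      rw [if_neg (by omega), hr3, E_b h _ hr2]
      rw [show n - (n - k) = k by omega] at *
      rcases hr with ⟨hr, hr'⟩ | ⟨hr, hr'⟩ <;> rw [hr', hr] <;> omega
    · obtain rfl : k = n := by omega
      have e := YP_unique (hJ ⟨bOdd k (k + 1), b_mem hk⟩) b_YP'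
      simp only [e]
      unfold val
      rw [if_pos rfl]

theorem stmt16 (n : ℕ) (hn : 1 ≤ n) :
    (∀ a ∈ BOdd n, ∀ k : Fin (n + 1), (k : ℕ) < n →
      a k ≠ 0 ∧ |a k| ≤ ((k : ℕ) : ℤ) + 1) ∧
    (∀ a ∈ BOdd n, ∀ b ∈ BOdd n,
      (fun k => min (a k) (b k)) ∈ BOdd n ∧ (fun k => max (a k) (b k)) ∈ BOdd n ∧
      (fun k => -a k) ∈ BOdd n ∧ (fun k => SImp (a k) (b k)) ∈ BOdd n) ∧
    Set.BijOn (tOdd n) (MOdd n) (BOdd n) := by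
  refine ⟨?_, ?_, ?_, ?_, ?_⟩
  · intro a ha k hk
    have := (BP_of_mem hn a ha).1 k hk
    rwa [E_coe] at this
  · intro a ha b hb
    refine ⟨mem_op hn a b min ha hb g_min ?_, mem_op hn a b max ha hb g_max ?_,
      mem_op hn a b (fun s _ => -s) ha hb (fun s _ => g_neg s) ?_,
      mem_op hn a b SImp ha hb g_imp ?_⟩
    · intro s t; omega
    · intro s t; omega
    · intro s t; simp
    · intro s t; unfold SImp; split_ifs <;> omega
  · intro x hx
    exact t_mem hn hx
  · intro x hx y hy h
    exact t_inj hn hx hy h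
  · intro a ha
    exact t_surj hn a ha
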